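/- Let N ≤ 2 (N ≥ 1), and let (u, v) be a classical solution of the system (P_Λ) with Λ = 1 and u > 0, v > 0 at every point of ℝ^N. Then u and v are constant functions, and these constants satisfy u² + v² = 1. -/

import Mathlib

/-!
For `Λ = 1` the system says that `w = (u, v)` solves the Ginzburg–Landau equation
`-Δw = (1 - |w|²) w`. The function `f = |w|² - 1` satisfies `Δf ≥ 2 f²` where it is positive, so
comparison with barriers blowing up on the boundary of large balls (Keller–Osserman) gives `|w| ≤ 1`
in every dimension, with no a priori growth assumption. Hence a positive component `⟪e, w⟫` is
superharmonic, and in dimension at most two it is constant, by comparison with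
`log |x - p|² - |x - p|⁻²` outside small balls around `p`. Its own equation
`0 = (1 - |w|²) ⟪e, w⟫` then forces `|w| = 1`, so every component of `w` is harmonic and bounded,
hence constant.
-/

open scoped RealInnerProductSpace
open Filter

noncomputable section

/-- The Laplacian of `f : ℝ^N → ℝ`, as the sum of the pure second partial
derivatives in the coordinate directions. -/
def lap (N : ℕ) (f : EuclideanSpace ℝ (Fin N) → ℝ) (x : EuclideanSpace ℝ (Fin N)) : ℝ :=
  ∑ i : Fin N,
    fderiv ℝ (fun y => fderiv ℝ f y (EuclideanSpace.single i 1)) x (EuclideanSpace.single i 1)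

/-- `(u, v)` is a classical solution of the system `(P_Λ)` on `ℝ^N`:
`u, v` are `C²` and `-Δu = u - u³ - Λ u v²`, `-Δv = v - v³ - Λ u² v` pointwise. -/
def IsSolution (N : ℕ) (Λ : ℝ) (u v : EuclideanSpace ℝ (Fin N) → ℝ) : Prop :=
  ContDiff ℝ 2 u ∧ ContDiff ℝ 2 v ∧
  (∀ x, -lap N u x = u x - (u x) ^ 3 - Λ * u x * (v x) ^ 2) ∧
  (∀ x, -lap N v x = v x - (v x) ^ 3 - Λ * (u x) ^ 2 * v x)

/-- Condition `(h∞)`: `u → 1`, `v → 0` as `x_N → +∞` and `u → 0`, `v → 1` as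
`x_N → -∞`, uniformly with respect to `x' ∈ ℝ^{N-1}` (the dimension is `N + 1`). -/
def Hinf (N : ℕ) (u v : EuclideanSpace ℝ (Fin (N + 1)) → ℝ) : Prop :=
  (∀ ε : ℝ, 0 < ε → ∃ M : ℝ, ∀ x : EuclideanSpace ℝ (Fin (N + 1)),
    M ≤ x (Fin.last N) → |u x - 1| < ε ∧ |v x| < ε) ∧
  (∀ ε : ℝ, 0 < ε → ∃ M : ℝ, ∀ x : EuclideanSpace ℝ (Fin (N + 1)),
    x (Fin.last N) ≤ M → |u x| < ε ∧ |v x - 1| < ε)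

section

open scoped Topology Laplacian

open Module

variable {E F : Type*} [NormedAddCommGroup E] [NormedAddCommGroup F]

/-! ### Calculus of the Laplacian -/

section Calculus

variable [InnerProductSpace ℝ E]

lemma contDiff_norm_sub_sq (p : E) : ContDiff ℝ 2 fun y : E => ‖y - p‖ ^ 2 :=
  (contDiff_id.sub contDiff_const).norm_sq ℝ

variable [FiniteDimensional ℝ E]

lemma laplacian_eq_sum_fderiv_fderiv_apply [NormedSpace ℝ F] {ι : Type*} [Fintype ι]
    (b : OrthonormalBasis ι ℝ E) {f : E → F} {x : E} (hf : DifferentiableAt ℝ (fderiv ℝ f) x) :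
    Δ f x = ∑ i, fderiv ℝ (fun y => fderiv ℝ f y (b i)) x (b i) := by
  simp [InnerProductSpace.laplacian_eq_iteratedFDeriv_orthonormalBasis f b,
    iteratedFDeriv_two_apply, fderiv_clm_apply hf (differentiableAt_const _)]

lemma laplacian_norm_sq [InnerProductSpace ℝ F] {ι : Type*} [Fintype ι]
    (b : OrthonormalBasis ι ℝ E) {w : E → F} {x : E} (hw : ContDiffAt ℝ 2 w x) :
    Δ (fun y => ‖w y‖ ^ 2) x = 2 * ⟪w x, Δ w x⟫ + 2 * ∑ i, ‖fderiv ℝ w x (b i)‖ ^ 2 := by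
  have hdw : DifferentiableAt ℝ (fderiv ℝ w) x :=
    (hw.fderiv_right (m := 1) le_rfl).differentiableAt one_ne_zero
  have hdsq : DifferentiableAt ℝ (fderiv ℝ fun y => ‖w y‖ ^ 2) x :=
    ((hw.norm_sq ℝ).fderiv_right (m := 1) le_rfl).differentiableAt one_ne_zero
  have hfirst (e : E) : (fun y => fderiv ℝ (fun z => ‖w z‖ ^ 2) y e)
      =ᶠ[𝓝 x] fun y => 2 * ⟪w y, fderiv ℝ w y e⟫ := by
    filter_upwards [hw.eventually (by simp)] with y hy
    simp [(hy.differentiableAt two_ne_zero).hasFDerivAt.norm_sq.fderiv]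
  have hsecond (e : E) : fderiv ℝ (fun y => fderiv ℝ (fun z => ‖w z‖ ^ 2) y e) x e
      = 2 * ⟪w x, fderiv ℝ (fun y => fderiv ℝ w y e) x e⟫ + 2 * ‖fderiv ℝ w x e‖ ^ 2 := by
    have hwe : DifferentiableAt ℝ (fun y => fderiv ℝ w y e) x :=
      hdw.clm_apply (differentiableAt_const e)
    have hwx : DifferentiableAt ℝ w x := hw.differentiableAt two_ne_zero
    rw [(hfirst e).fderiv_eq, fderiv_const_mul (hwx.inner ℝ hwe),
      smul_apply, fderiv_inner_apply ℝ hwx hwe, real_inner_self_eq_norm_sq,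
      smul_eq_mul, mul_add]
  simp only [laplacian_eq_sum_fderiv_fderiv_apply b hdsq,
    laplacian_eq_sum_fderiv_fderiv_apply b hdw, hsecond, Finset.sum_add_distrib, inner_sum,
    Finset.mul_sum]

lemma two_mul_inner_laplacian_le_laplacian_norm_sq [InnerProductSpace ℝ F] {w : E → F} {x : E}
    (hw : ContDiffAt ℝ 2 w x) : 2 * ⟪w x, Δ w x⟫ ≤ Δ (fun y => ‖w y‖ ^ 2) x := by
  rw [laplacian_norm_sq (stdOrthonormalBasis ℝ E) hw]
  exact le_add_of_nonneg_right (by positivity)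

lemma laplacian_comp {ι : Type*} [Fintype ι] (b : OrthonormalBasis ι ℝ E) {g g' : ℝ → ℝ}
    {g'' : ℝ} {h : E → ℝ} {x : E} (hg : ∀ᶠ s in 𝓝 (h x), HasDerivAt g (g' s) s)
    (hg' : HasDerivAt g' g'' (h x)) (hh : ContDiffAt ℝ 2 h x) :
    Δ (fun y => g (h y)) x = g' (h x) * Δ h x + g'' * ∑ i, fderiv ℝ h x (b i) ^ 2 := by
  have hhx : HasFDerivAt h (fderiv ℝ h x) x := (hh.differentiableAt two_ne_zero).hasFDerivAt
  have hdh : DifferentiableAt ℝ (fderiv ℝ h) x :=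
    (hh.fderiv_right (m := 1) le_rfl).differentiableAt one_ne_zero
  have hg'h : HasFDerivAt (fun y => g' (h y)) (g'' • fderiv ℝ h x) x :=
    hg'.comp_hasFDerivAt x hhx
  have hfirst : fderiv ℝ (fun y => g (h y)) =ᶠ[𝓝 x] fun y => g' (h y) • fderiv ℝ h y := by
    filter_upwards [hhx.continuousAt.eventually hg, hh.eventually (by simp)] with y hgy hhy
    exact (hgy.comp_hasFDerivAt y (hhy.differentiableAt two_ne_zero).hasFDerivAt).fderiv
  have hsecond (e : E) : fderiv ℝ (fun y => fderiv ℝ (fun z => g (h z)) y e) x e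
      = g' (h x) * fderiv ℝ (fun y => fderiv ℝ h y e) x e + g'' * fderiv ℝ h x e ^ 2 := by
    have hhe : DifferentiableAt ℝ (fun y => fderiv ℝ h y e) x :=
      hdh.clm_apply (differentiableAt_const e)
    have hfirst_e : (fun y => fderiv ℝ (fun z => g (h z)) y e)
        =ᶠ[𝓝 x] fun y => g' (h y) * fderiv ℝ h y e :=
      hfirst.mono fun y hy => by simp [hy]
    rw [hfirst_e.fderiv_eq, fderiv_fun_mul hg'h.differentiableAt hhe, hg'h.fderiv]
    simp only [add_apply, smul_apply, smul_eq_mul]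
    ring
  have hdgh : DifferentiableAt ℝ (fderiv ℝ fun y => g (h y)) x :=
    (hg'h.differentiableAt.smul hdh).congr_of_eventuallyEq hfirst
  simp only [laplacian_eq_sum_fderiv_fderiv_apply b hdgh,
    laplacian_eq_sum_fderiv_fderiv_apply b hdh, hsecond, Finset.sum_add_distrib, Finset.mul_sum]

lemma laplacian_norm_sub_sq (p x : E) : Δ (fun y => ‖y - p‖ ^ 2) x = 2 * finrank ℝ E := by
  have hfderiv : fderiv ℝ (fun y : E => y - p) = fun _ => ContinuousLinearMap.id ℝ E := by
    funext y
    rw [fderiv_sub_const, fderiv_fun_id]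
  have hharm : Δ (fun y : E => y - p) x = 0 := by
    simp [laplacian_eq_sum_fderiv_fderiv_apply (stdOrthonormalBasis ℝ E)
      (f := fun y : E => y - p) (x := x), hfderiv]
  rw [laplacian_norm_sq (stdOrthonormalBasis ℝ E) (by fun_prop), hharm, hfderiv]
  simp

lemma laplacian_comp_norm_sub_sq {g g' : ℝ → ℝ} {g'' : ℝ} {p x : E}
    (hg : ∀ᶠ s in 𝓝 (‖x - p‖ ^ 2), HasDerivAt g (g' s) s)
    (hg' : HasDerivAt g' g'' (‖x - p‖ ^ 2)) :
    Δ (fun y => g (‖y - p‖ ^ 2)) x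
      = 2 * finrank ℝ E * g' (‖x - p‖ ^ 2) + 4 * ‖x - p‖ ^ 2 * g'' := by
  have hgrad (e : E) : fderiv ℝ (fun y => ‖y - p‖ ^ 2) x e = 2 * ⟪x - p, e⟫ := by
    have hsub : HasFDerivAt (fun y : E => y - p) (ContinuousLinearMap.id ℝ E) x :=
      (hasFDerivAt_id x).sub_const p
    simp [hsub.norm_sq.fderiv, inner_sub_left]
  have hgrad_sq : ∑ i, fderiv ℝ (fun y => ‖y - p‖ ^ 2) x (stdOrthonormalBasis ℝ E i) ^ 2
      = 4 * ‖x - p‖ ^ 2 := by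
    simp_rw [hgrad, mul_pow, ← Finset.mul_sum, OrthonormalBasis.sum_sq_inner_left]
    norm_num
  rw [laplacian_comp (stdOrthonormalBasis ℝ E) (h := fun y => ‖y - p‖ ^ 2) hg hg'
    (contDiff_norm_sub_sq p).contDiffAt, laplacian_norm_sub_sq, hgrad_sq]
  ring

end Calculus

/-! ### Minimum principle -/

section MinimumPrinciple

lemma deriv_deriv_nonneg_of_isLocalMin {φ : ℝ → ℝ} {t : ℝ} (hφ : ContinuousAt φ t)
    (hmin : IsLocalMin φ t) : 0 ≤ deriv (deriv φ) t := by
  by_contra! hneg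
  have hmax : IsLocalMax φ t := isLocalMax_of_deriv_deriv_neg hneg hmin.deriv_eq_zero hφ
  have hconst : φ =ᶠ[𝓝 t] fun _ => φ t := by
    filter_upwards [hmin, hmax] with s hle hge
    exact le_antisymm hge hle
  simp [hconst.deriv.deriv_eq] at hneg

lemma deriv_deriv_comp_line [NormedSpace ℝ E] [NormedSpace ℝ F] {f : E → F} {x : E}
    (hf : ContDiffAt ℝ 2 f x) (e : E) :
    deriv (deriv fun t : ℝ => f (x + t • e)) 0 = fderiv ℝ (fun y => fderiv ℝ f y e) x e := by
  have hline (t : ℝ) : HasDerivAt (fun s : ℝ => x + s • e) e t := by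
    simpa using ((hasDerivAt_id t).smul_const e).const_add x
  have hline_tendsto : Tendsto (fun s : ℝ => x + s • e) (𝓝 0) (𝓝 x) := by
    simpa using (hline 0).continuousAt.tendsto
  have hfirst : deriv (fun t : ℝ => f (x + t • e)) =ᶠ[𝓝 0] fun t => fderiv ℝ f (x + t • e) e := by
    filter_upwards [hline_tendsto.eventually (hf.eventually (by simp))] with t ht
    exact ((ht.differentiableAt two_ne_zero).hasFDerivAt.comp_hasDerivAt t (hline t)).deriv
  have hdf : DifferentiableAt ℝ (fun y => fderiv ℝ f y e) (x + (0 : ℝ) • e) := by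
    simpa using ((hf.fderiv_right (m := 1) le_rfl).differentiableAt one_ne_zero).clm_apply
      (differentiableAt_const e)
  rw [hfirst.deriv_eq]
  simpa [Function.comp_def] using (hdf.hasFDerivAt.comp_hasDerivAt 0 (hline 0)).deriv

variable [InnerProductSpace ℝ E] [FiniteDimensional ℝ E]

lemma laplacian_nonneg_of_isLocalMin {f : E → ℝ} {x : E} (hf : ContDiffAt ℝ 2 f x)
    (hmin : IsLocalMin f x) : 0 ≤ Δ f x := by
  rw [laplacian_eq_sum_fderiv_fderiv_apply (stdOrthonormalBasis ℝ E)
    ((hf.fderiv_right (m := 1) le_rfl).differentiableAt one_ne_zero)]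
  refine Finset.sum_nonneg fun i _ => ?_
  rw [← deriv_deriv_comp_line hf]
  have hline : Tendsto (fun t : ℝ => x + t • stdOrthonormalBasis ℝ E i) (𝓝 0) (𝓝 x) :=
    Continuous.tendsto' (by fun_prop) _ _ (by simp)
  refine deriv_deriv_nonneg_of_isLocalMin ?_ ?_
  · simpa [ContinuousAt, Function.comp_def] using hf.continuousAt.tendsto.comp hline
  · simpa [IsLocalMin, IsMinFilter] using hline.eventually hmin

lemma le_of_le_frontier_of_laplacian_neg {K : Set E} (hK : IsCompact K) {f : E → ℝ} {c : ℝ}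
    (hcont : ContinuousOn f K) (hf : ∀ x ∈ interior K, ContDiffAt ℝ 2 f x)
    (hlap : ∀ x ∈ interior K, Δ f x < 0) (hc : ∀ x ∈ frontier K, c ≤ f x) :
    ∀ x ∈ K, c ≤ f x := by
  intro z hz
  obtain ⟨x, hxK, hmin⟩ := hK.exists_isMinOn ⟨z, hz⟩ hcont
  have hx : x ∉ interior K := fun hx =>
    (laplacian_nonneg_of_isLocalMin (hf x hx) (hmin.isLocalMin (mem_interior_iff_mem_nhds.1 hx))
      ).not_gt (hlap x hx)
  exact (hc x ⟨subset_closure hxK, hx⟩).trans (hmin hz)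

end MinimumPrinciple

/-! ### The Keller–Osserman bound -/

section KellerOsserman

/-- The Keller–Osserman barrier `(R² - |y - p|²)⁻²`, blowing up on the sphere of radius `R`
around `p`. On that sphere its value is `0` by the convention `0⁻¹ = 0`. -/
def kellerOssermanBarrier (p : E) (R : ℝ) (y : E) : ℝ := ((R ^ 2 - ‖y - p‖ ^ 2) ^ 2)⁻¹

lemma norm_sub_sq_lt_sq_of_mem_ball {p x : E} {R : ℝ} (hx : x ∈ Metric.ball p R) :
    ‖x - p‖ ^ 2 < R ^ 2 := by
  rw [mem_ball_iff_norm] at hx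
  gcongr

variable [InnerProductSpace ℝ E]

lemma contDiffAt_kellerOssermanBarrier {p x : E} {R : ℝ} (hx : x ∈ Metric.ball p R) :
    ContDiffAt ℝ 2 (kellerOssermanBarrier p R) x :=
  ((contDiffAt_const.sub (contDiff_norm_sub_sq p).contDiffAt).pow 2).inv
    (pow_ne_zero 2 (sub_pos.2 (norm_sub_sq_lt_sq_of_mem_ball hx)).ne')

variable [FiniteDimensional ℝ E]

lemma laplacian_kellerOssermanBarrier {p x : E} {R : ℝ} (hx : x ∈ Metric.ball p R) :
    Δ (kellerOssermanBarrier p R) x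
      = (4 * finrank ℝ E * (R ^ 2 - ‖x - p‖ ^ 2) + 24 * ‖x - p‖ ^ 2)
        * kellerOssermanBarrier p R x ^ 2 := by
  have hx' := norm_sub_sq_lt_sq_of_mem_ball hx
  have hderiv (s : ℝ) (hs : s < R ^ 2) :
      HasDerivAt (fun s => ((R ^ 2 - s) ^ 2)⁻¹) (2 * ((R ^ 2 - s) ^ 3)⁻¹) s := by
    have hne : R ^ 2 - s ≠ 0 := (sub_pos.2 hs).ne'
    refine ((((hasDerivAt_id s).const_sub (R ^ 2)).pow 2).inv (pow_ne_zero 2 hne)).congr_deriv ?_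
    simp only [Nat.cast_ofNat, id_eq, Nat.add_one_sub_one, pow_one, mul_neg, mul_one, neg_neg,
      Pi.pow_apply]
    field_simp
  have hderiv2 (s : ℝ) (hs : s < R ^ 2) :
      HasDerivAt (fun s => 2 * ((R ^ 2 - s) ^ 3)⁻¹) (6 * ((R ^ 2 - s) ^ 4)⁻¹) s := by
    have hne : R ^ 2 - s ≠ 0 := (sub_pos.2 hs).ne'
    refine (((((hasDerivAt_id s).const_sub (R ^ 2)).pow 3).inv
      (pow_ne_zero 3 hne)).const_mul 2).congr_deriv ?_
    simp only [Nat.cast_ofNat, id_eq, Nat.add_one_sub_one, mul_neg, mul_one, neg_neg, Pi.pow_apply]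
    field_simp
    norm_num
  have hne : R ^ 2 - ‖x - p‖ ^ 2 ≠ 0 := (sub_pos.2 hx').ne'
  unfold kellerOssermanBarrier
  rw [laplacian_comp_norm_sub_sq ((eventually_lt_nhds hx').mono hderiv) (hderiv2 _ hx')]
  field_simp
  ring

/-- The multiple `b` of the barrier touching `f` from above is the maximum of
`f (R² - |· - p|²)²` on the closed ball. -/
lemma exists_isLocalMin_kellerOssermanBarrier_sub {f : E → ℝ} (hf : Continuous f) {p : E} {R : ℝ}
    (hR : 0 < R) (hp : 0 < f p) :
    ∃ x ∈ Metric.ball p R, ∃ b, f p * R ^ 4 ≤ b ∧ f x = b * kellerOssermanBarrier p R x ∧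
      IsLocalMin (fun y => b * kellerOssermanBarrier p R y - f y) x := by
  have hpR : p ∈ Metric.closedBall p R := Metric.mem_closedBall_self hR.le
  obtain ⟨x, hxR, hmax⟩ := (isCompact_closedBall p R).exists_isMaxOn ⟨p, hpR⟩
    (f := fun y => f y * (R ^ 2 - ‖y - p‖ ^ 2) ^ 2) (by fun_prop)
  set b := f x * (R ^ 2 - ‖x - p‖ ^ 2) ^ 2 with hb
  have hpb : f p * R ^ 4 ≤ b := by
    have h := hmax hpR
    simp only [Set.mem_ofPred_eq, sub_self, norm_zero] at h
    linarith
  have hxball : x ∈ Metric.ball p R := by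
    refine Metric.mem_ball.2 (lt_of_le_of_ne hxR fun hx => ?_)
    rw [dist_eq_norm] at hx
    have : 0 < f p * R ^ 4 := by positivity
    simp only [hx, sub_self] at hb
    linarith
  have hpos {y : E} (hy : y ∈ Metric.ball p R) : 0 < (R ^ 2 - ‖y - p‖ ^ 2) ^ 2 :=
    pow_pos (sub_pos.2 (norm_sub_sq_lt_sq_of_mem_ball hy)) 2
  have htouch : f x = b * kellerOssermanBarrier p R x :=
    (eq_mul_inv_iff_mul_eq₀ (hpos hxball).ne').2 rfl
  refine ⟨x, hxball, b, hpb, htouch, ?_⟩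
  filter_upwards [Metric.isOpen_ball.mem_nhds hxball] with y hy
  have habove : f y ≤ b * kellerOssermanBarrier p R y :=
    (le_mul_inv_iff₀ (hpos hy)).2 (hmax (Metric.ball_subset_closedBall hy))
  linarith

lemma mul_mul_sq_le_of_mul_sq_le_laplacian {f : E → ℝ} (hf : ContDiff ℝ 2 f) {c : ℝ} (hc : 0 < c)
    (hlap : ∀ x, 0 < f x → c * f x ^ 2 ≤ Δ f x) {p : E} (hp : 0 < f p) {R : ℝ} (hR : 0 < R) :
    c * f p * R ^ 2 ≤ 4 * finrank ℝ E + 24 := by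
  obtain ⟨x, hx, b, hpb, htouch, hmin⟩ :=
    exists_isLocalMin_kellerOssermanBarrier_sub hf.continuous hR hp
  have hb : 0 < b := lt_of_lt_of_le (by positivity) hpb
  have hq := norm_sub_sq_lt_sq_of_mem_ball hx
  have hψ : 0 < kellerOssermanBarrier p R x := inv_pos.2 (pow_pos (sub_pos.2 hq) 2)
  have hψ_diff := contDiffAt_kellerOssermanBarrier hx
  have hfx : 0 < f x := htouch ▸ mul_pos hb hψ
  have hcompare : Δ f x ≤ b * Δ (kellerOssermanBarrier p R) x := by
    have hbψ : ContDiffAt ℝ 2 (b • kellerOssermanBarrier p R) x := hψ_diff.const_smul b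
    have hnonneg : 0 ≤ Δ (b • kellerOssermanBarrier p R - f) x :=
      laplacian_nonneg_of_isLocalMin (hbψ.sub hf.contDiffAt) hmin
    rw [hbψ.laplacian_sub hf.contDiffAt, InnerProductSpace.laplacian_smul b hψ_diff] at hnonneg
    exact sub_nonneg.1 hnonneg
  have hmul : c * b * (b * kellerOssermanBarrier p R x ^ 2)
      ≤ (4 * finrank ℝ E + 24) * R ^ 2 * (b * kellerOssermanBarrier p R x ^ 2) := calc
    _ = c * f x ^ 2 := by rw [htouch]; ring
    _ ≤ b * Δ (kellerOssermanBarrier p R) x := (hlap x hfx).trans hcompare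
    _ = (4 * finrank ℝ E * (R ^ 2 - ‖x - p‖ ^ 2) + 24 * ‖x - p‖ ^ 2)
        * (b * kellerOssermanBarrier p R x ^ 2) := by
      rw [laplacian_kellerOssermanBarrier hx]; ring
    _ ≤ _ := by
      gcongr
      have : 0 ≤ finrank ℝ E * ‖x - p‖ ^ 2 := by positivity
      linarith
  have hcb : c * b ≤ (4 * finrank ℝ E + 24) * R ^ 2 := le_of_mul_le_mul_right hmul (by positivity)
  refine le_of_mul_le_mul_right ?_ (pow_pos hR 2)
  calc c * f p * R ^ 2 * R ^ 2 = c * (f p * R ^ 4) := by ring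
    _ ≤ c * b := by gcongr
    _ ≤ _ := hcb

theorem nonpos_of_mul_sq_le_laplacian {f : E → ℝ} (hf : ContDiff ℝ 2 f) {c : ℝ} (hc : 0 < c)
    (hlap : ∀ x, 0 < f x → c * f x ^ 2 ≤ Δ f x) (p : E) : f p ≤ 0 := by
  by_contra! hp
  have hgrow : Tendsto (fun R : ℝ => c * f p * R ^ 2) atTop atTop :=
    (tendsto_pow_atTop two_ne_zero).const_mul_atTop (mul_pos hc hp)
  obtain ⟨R, hbig, hR⟩ :=
    ((hgrow.eventually_gt_atTop (4 * finrank ℝ E + 24 : ℝ)).and (eventually_gt_atTop 0)).exists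
  exact (mul_mul_sq_le_of_mul_sq_le_laplacian hf hc hlap hp hR).not_gt hbig

end KellerOsserman

/-! ### Superharmonic functions in dimension at most two -/

section Superharmonic

/-- Radial comparison function, with `s` the squared distance to the centre. Up to a factor, `log s`
is the planar fundamental solution; the correction `-s⁻¹` makes it strictly superharmonic. -/
def logBarrier (s : ℝ) : ℝ := Real.log s - s⁻¹

lemma contDiffAt_logBarrier {s : ℝ} (hs : s ≠ 0) : ContDiffAt ℝ 2 logBarrier s :=
  (Real.contDiffAt_log.2 hs).sub (contDiffAt_inv ℝ hs)

lemma tendsto_logBarrier_atTop : Tendsto logBarrier atTop atTop :=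
  (Real.tendsto_log_atTop.atTop_add tendsto_inv_atTop_zero.neg).congr fun s =>
    (sub_eq_add_neg (Real.log s) s⁻¹).symm

variable [InnerProductSpace ℝ E]

lemma contDiffAt_logBarrier_norm_sub_sq {p x : E} (hx : x ≠ p) :
    ContDiffAt ℝ 2 (fun y => logBarrier (‖y - p‖ ^ 2)) x :=
  ContDiffAt.comp (f := fun y => ‖y - p‖ ^ 2) x
    (contDiffAt_logBarrier (pow_ne_zero 2 (norm_ne_zero_iff.2 (sub_ne_zero.2 hx))))
    (contDiff_norm_sub_sq p).contDiffAt

variable [FiniteDimensional ℝ E]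

lemma laplacian_logBarrier_neg (hE : finrank ℝ E ≤ 2) {p x : E} (hx : x ≠ p) :
    Δ (fun y => logBarrier (‖y - p‖ ^ 2)) x < 0 := by
  have hderiv (s : ℝ) (hs : 0 < s) : HasDerivAt logBarrier (s⁻¹ + (s ^ 2)⁻¹) s :=
    ((Real.hasDerivAt_log hs.ne').sub (hasDerivAt_inv hs.ne')).congr_deriv (by ring)
  have hderiv2 (s : ℝ) (hs : 0 < s) :
      HasDerivAt (fun s => s⁻¹ + (s ^ 2)⁻¹) (-(s ^ 2)⁻¹ - 2 * (s ^ 3)⁻¹) s := by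
    refine ((hasDerivAt_inv hs.ne').add
      (((hasDerivAt_id s).pow 2).inv (pow_ne_zero 2 hs.ne'))).congr_deriv ?_
    simp only [Nat.cast_ofNat, id_eq, Nat.add_one_sub_one, pow_one, mul_one, Pi.pow_apply]
    field_simp
    ring
  have hq : 0 < ‖x - p‖ ^ 2 := pow_pos (norm_sub_pos_iff.2 hx) 2
  rw [laplacian_comp_norm_sub_sq ((eventually_gt_nhds hq).mono hderiv) (hderiv2 _ hq)]
  generalize ‖x - p‖ ^ 2 = q at hq
  have hn : (finrank ℝ E : ℝ) ≤ 2 := by exact_mod_cast hE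
  calc 2 * finrank ℝ E * (q⁻¹ + (q ^ 2)⁻¹) + 4 * q * (-(q ^ 2)⁻¹ - 2 * (q ^ 3)⁻¹)
      ≤ 2 * 2 * (q⁻¹ + (q ^ 2)⁻¹) + 4 * q * (-(q ^ 2)⁻¹ - 2 * (q ^ 3)⁻¹) := by gcongr
    _ = -(4 * (q ^ 2)⁻¹) := by field_simp; ring
    _ < 0 := neg_lt_zero.2 (by positivity)

lemma add_mul_logBarrier_le_of_laplacian_nonpos (hE : finrank ℝ E ≤ 2) {u : E → ℝ}
    (hu : ContDiff ℝ 2 u) (hbdd : BddBelow (Set.range u)) (hlap : ∀ x, Δ u x ≤ 0) {p : E}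
    {c δ ε : ℝ} (hδ : 0 < δ) (hc : ∀ x, ‖x - p‖ = δ → c ≤ u x) (hε : 0 < ε)
    {z : E} (hz : δ ≤ ‖z - p‖) :
    c + ε * logBarrier (δ ^ 2) ≤ u z + ε * logBarrier (‖z - p‖ ^ 2) := by
  obtain ⟨m, hm⟩ := hbdd
  have hgrow : Tendsto (fun r : ℝ => m + ε * logBarrier (r ^ 2)) atTop atTop :=
    tendsto_atTop_add_const_left _ _ <|
      (tendsto_logBarrier_atTop.comp (tendsto_pow_atTop two_ne_zero)).const_mul_atTop hε
  obtain ⟨R, hRc, hRz⟩ := ((hgrow.eventually_ge_atTop (c + ε * logBarrier (δ ^ 2))).and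
    (eventually_ge_atTop ‖z - p‖)).exists
  have hdist : Continuous fun y : E => ‖y - p‖ := by fun_prop
  set K : Set E := (fun y => ‖y - p‖) ⁻¹' Set.Icc δ R
  have hK : IsCompact K :=
    (isCompact_closedBall p R).of_isClosed_subset (isClosed_Icc.preimage hdist)
      fun y hy => mem_closedBall_iff_norm.2 hy.2
  set ψ : E → ℝ := fun y => logBarrier (‖y - p‖ ^ 2)
  have hne {y : E} (hy : y ∈ K) : y ≠ p := norm_sub_pos_iff.1 (hδ.trans_le hy.1)
  have hψ {y : E} (hy : y ∈ K) : ContDiffAt ℝ 2 ψ y := contDiffAt_logBarrier_norm_sub_sq (hne hy)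
  have hεψ {y : E} (hy : y ∈ K) : ContDiffAt ℝ 2 (ε • ψ) y := (hψ hy).const_smul ε
  refine le_of_le_frontier_of_laplacian_neg hK (f := u + ε • ψ)
    (fun y hy => (hu.contDiffAt.add (hεψ hy)).continuousAt.continuousWithinAt)
    (fun y hy => hu.contDiffAt.add (hεψ (interior_subset hy)))
    (fun y hy => ?_) (fun y hy => ?_) z ⟨hz, hRz⟩
  · have hyK := interior_subset hy
    rw [hu.contDiffAt.laplacian_add (hεψ hyK), InnerProductSpace.laplacian_smul ε (hψ hyK)]
    exact add_neg_of_nonpos_of_neg (hlap y) (mul_neg_of_pos_of_neg hε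
      (laplacian_logBarrier_neg hE (hne hyK)))
  · have hsphere : ‖y - p‖ = δ ∨ ‖y - p‖ = R := by
      simpa [frontier_Icc (hz.trans hRz)] using hdist.frontier_preimage_subset _ hy
    rcases hsphere with hyδ | hyR
    · simpa [ψ, hyδ] using hc y hyδ
    · simpa [ψ, hyR] using hRc.trans (add_le_add_left (hm ⟨y, rfl⟩) _)

lemma le_of_le_sphere_of_laplacian_nonpos (hE : finrank ℝ E ≤ 2) {u : E → ℝ}
    (hu : ContDiff ℝ 2 u) (hbdd : BddBelow (Set.range u)) (hlap : ∀ x, Δ u x ≤ 0) {p : E}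
    {c δ : ℝ} (hδ : 0 < δ) (hc : ∀ x, ‖x - p‖ = δ → c ≤ u x) {z : E} (hz : δ ≤ ‖z - p‖) :
    c ≤ u z := by
  have hlim (a b : ℝ) : Tendsto (fun ε : ℝ => a + ε * b) (𝓝[>] 0) (𝓝 a) :=
    (Continuous.tendsto' (by fun_prop) _ _ (by simp)).mono_left nhdsWithin_le_nhds
  exact le_of_tendsto_of_tendsto (hlim c _) (hlim (u z) _) <|
    eventually_mem_nhdsWithin.mono fun ε hε =>
      add_mul_logBarrier_le_of_laplacian_nonpos hE hu hbdd hlap hδ hc hε hz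

theorem eq_of_laplacian_nonpos_of_bddBelow (hE : finrank ℝ E ≤ 2) {u : E → ℝ}
    (hu : ContDiff ℝ 2 u) (hbdd : BddBelow (Set.range u)) (hlap : ∀ x, Δ u x ≤ 0) (x y : E) :
    u x = u y := by
  suffices hle : ∀ p z, u p ≤ u z from le_antisymm (hle x y) (hle y x)
  intro p z
  rcases eq_or_ne z p with rfl | hzp
  · rfl
  refine le_of_forall_lt_imp_le_of_dense fun c hc => ?_
  obtain ⟨r, hr, hball⟩ :=
    Metric.eventually_nhds_iff.1 (hu.continuous.continuousAt.eventually (lt_mem_nhds hc))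
  have hδ : 0 < min (r / 2) ‖z - p‖ := lt_min (half_pos hr) (norm_sub_pos_iff.2 hzp)
  refine le_of_le_sphere_of_laplacian_nonpos hE hu hbdd hlap hδ (fun x hx => (hball ?_).le)
    (min_le_right _ _)
  rw [dist_eq_norm, hx]
  exact (min_le_left _ _).trans_lt (half_lt_self hr)

end Superharmonic

/-! ### The Ginzburg–Landau equation -/

section GinzburgLandau

variable [InnerProductSpace ℝ E] [FiniteDimensional ℝ E]

/-- `w` is an entire classical solution of the Ginzburg–Landau equation `-Δw = (1 - |w|²) w`.
For `Λ = 1` the system `(P_Λ)` is this equation for `w = (u, v)`. -/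
structure IsGinzburgLandauSolution [NormedSpace ℝ F] (w : E → F) : Prop where
  contDiff : ContDiff ℝ 2 w
  laplacian_eq : ∀ x, Δ w x = (‖w x‖ ^ 2 - 1) • w x

namespace IsGinzburgLandauSolution

variable [InnerProductSpace ℝ F] {w : E → F}

lemma norm_le_one (hw : IsGinzburgLandauSolution w) (x : E) : ‖w x‖ ≤ 1 := by
  have hsq : ContDiff ℝ 2 fun y => ‖w y‖ ^ 2 := hw.contDiff.norm_sq ℝ
  have hlap (y : E) (hy : 0 < ‖w y‖ ^ 2 - 1) :
      2 * (‖w y‖ ^ 2 - 1) ^ 2 ≤ Δ (fun z => ‖w z‖ ^ 2 - 1 : E → ℝ) y := calc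
    _ ≤ 2 * ((‖w y‖ ^ 2 - 1) * ‖w y‖ ^ 2) := by nlinarith
    _ = 2 * ⟪w y, Δ w y⟫ := by
      rw [hw.laplacian_eq, real_inner_smul_right, real_inner_self_eq_norm_sq]
    _ ≤ Δ (fun z => ‖w z‖ ^ 2) y :=
      two_mul_inner_laplacian_le_laplacian_norm_sq hw.contDiff.contDiffAt
    _ = Δ (fun z => ‖w z‖ ^ 2 - 1 : E → ℝ) y := by
      have hsub := hsq.contDiffAt.laplacian_sub (x := y) (contDiffAt_const (c := (1 : ℝ)))
      rw [InnerProductSpace.laplacian_const, Pi.zero_apply, sub_zero] at hsub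
      exact hsub.symm
  have hle := nonpos_of_mul_sq_le_laplacian (hsq.sub contDiff_const) two_pos hlap x
  exact (sq_le_one_iff₀ (norm_nonneg _)).1 (sub_nonpos.1 hle)

lemma laplacian_inner (hw : IsGinzburgLandauSolution w) (e : F) (x : E) :
    Δ (fun y => ⟪e, w y⟫) x = (‖w x‖ ^ 2 - 1) * ⟪e, w x⟫ := by
  have hcomp := hw.contDiff.contDiffAt.laplacian_CLM_comp_left (x := x) (l := innerSL ℝ e)
  rwa [Function.comp_apply, hw.laplacian_eq, innerSL_apply_apply, real_inner_smul_right] at hcomp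

lemma inner_eq_of_forall_mul_inner_nonneg (hE : finrank ℝ E ≤ 2)
    (hw : IsGinzburgLandauSolution w) {e : F} (he : ∀ x, 0 ≤ (1 - ‖w x‖ ^ 2) * ⟪e, w x⟫)
    (x y : E) : ⟪e, w x⟫ = ⟪e, w y⟫ := by
  refine eq_of_laplacian_nonpos_of_bddBelow hE (contDiff_const.inner ℝ hw.contDiff) ?_ ?_ x y
  · refine ⟨-‖e‖, Set.forall_mem_range.2 fun x => neg_le_of_abs_le ?_⟩
    exact (abs_real_inner_le_norm e (w x)).trans
      (mul_le_of_le_one_right (norm_nonneg e) (hw.norm_le_one x))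
  · intro x
    rw [hw.laplacian_inner]
    linarith [he x]

lemma norm_eq_one_of_inner_pos (hE : finrank ℝ E ≤ 2) (hw : IsGinzburgLandauSolution w) {e : F}
    (he : ∀ x, 0 < ⟪e, w x⟫) (x : E) : ‖w x‖ = 1 := by
  have hconst : (fun y => ⟪e, w y⟫) = fun _ => ⟪e, w x⟫ := funext fun y =>
    hw.inner_eq_of_forall_mul_inner_nonneg hE (fun z => mul_nonneg
      (sub_nonneg.2 (pow_le_one₀ (norm_nonneg _) (hw.norm_le_one z))) (he z).le) y x
  have hzero : (‖w x‖ ^ 2 - 1) * ⟪e, w x⟫ = 0 := by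
    rw [← hw.laplacian_inner, hconst, InnerProductSpace.laplacian_const, Pi.zero_apply]
  have hsq : ‖w x‖ ^ 2 = 1 := sub_eq_zero.1 ((mul_eq_zero.1 hzero).resolve_right (he x).ne')
  exact (pow_eq_one_iff_of_nonneg (norm_nonneg _) two_ne_zero).1 hsq

end IsGinzburgLandauSolution

theorem stmt_7_general [InnerProductSpace ℝ F] (hE : finrank ℝ E ≤ 2) {w : E → F}
    (hw : IsGinzburgLandauSolution w) {e : F} (he : ∀ x, 0 < ⟪e, w x⟫) :
    (∀ x y, w x = w y) ∧ ∀ x, ‖w x‖ = 1 := by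
  have hnorm := hw.norm_eq_one_of_inner_pos hE he
  exact ⟨fun x y => ext_inner_left ℝ fun f =>
    hw.inner_eq_of_forall_mul_inner_nonneg hE (fun z => by simp [hnorm z]) x y, hnorm⟩

end GinzburgLandau

lemma lap_eq_laplacian {N : ℕ} {f : EuclideanSpace ℝ (Fin N) → ℝ} (hf : ContDiff ℝ 2 f)
    (x : EuclideanSpace ℝ (Fin N)) : lap N f x = Δ f x := by
  rw [laplacian_eq_sum_fderiv_fderiv_apply (EuclideanSpace.basisFun (Fin N) ℝ)
    ((hf.fderiv_right (m := 1) le_rfl).differentiable one_ne_zero x)]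
  simp only [lap, EuclideanSpace.basisFun_apply]

lemma IsSolution.isGinzburgLandauSolution {N : ℕ} {u v : EuclideanSpace ℝ (Fin N) → ℝ}
    (h : IsSolution N 1 u v) : IsGinzburgLandauSolution fun x => (⟨u x, v x⟩ : ℂ) := by
  obtain ⟨hu, hv, hlap_u, hlap_v⟩ := h
  have hw : ContDiff ℝ 2 fun x => (⟨u x, v x⟩ : ℂ) :=
    Complex.equivRealProdCLM.symm.contDiff.comp (hu.prodMk hv)
  have hre (x) := hw.contDiffAt.laplacian_CLM_comp_left (x := x) (l := Complex.reCLM)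
  have him (x) := hw.contDiffAt.laplacian_CLM_comp_left (x := x) (l := Complex.imCLM)
  refine ⟨hw, fun x => Complex.ext ?_ ?_⟩
  · calc (Δ (fun x => (⟨u x, v x⟩ : ℂ)) x).re = Δ u x := (hre x).symm
      _ = _ := by
        rw [← lap_eq_laplacian hu, Complex.sq_norm, Complex.normSq_mk, Complex.smul_re, smul_eq_mul]
        linarith [hlap_u x]
  · calc (Δ (fun x => (⟨u x, v x⟩ : ℂ)) x).im = Δ v x := (him x).symm
      _ = _ := by
        rw [← lap_eq_laplacian hv, Complex.sq_norm, Complex.normSq_mk, Complex.smul_im, smul_eq_mul]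
        linarith [hlap_v x]

end

/-- Theorem 1.7: Liouville theorem for `Λ = 1` in dimension `≤ 2`:
positive solutions are constant, with `u² + v² = 1`. -/
theorem stmt_7 (N : ℕ) (hN : N + 1 ≤ 2)
    (u v : EuclideanSpace ℝ (Fin (N + 1)) → ℝ)
    (hsol : IsSolution (N + 1) 1 u v)
    (hu : ∀ x, 0 < u x) (hv : ∀ x, 0 < v x) :
    (∀ x y : EuclideanSpace ℝ (Fin (N + 1)), u x = u y ∧ v x = v y) ∧
    (∀ x, (u x) ^ 2 + (v x) ^ 2 = 1) := by
  obtain ⟨hconst, hnorm⟩ :=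
    stmt_7_general (by simpa using hN) hsol.isGinzburgLandauSolution (e := 1) (by simpa using hu)
  exact ⟨fun x y => Complex.ext_iff.1 (hconst x y), fun x => by
    simpa [Complex.norm_eq_sqrt_sq_add_sq] using hnorm x⟩
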